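/- Let I ⊆ {1,…,s} and Σ a finite set of zero-nonzero conditions on I. For every J ∈ Ada(Σ) one has card(J) < bit(card(Σ)); equivalently, 2^{card(J)} ≤ card(Σ). -/

import Mathlib

open Classical in
/-- Restriction (extension by zero) of a zero-nonzero condition to the index set `I`. -/
noncomputable def zres (I : Finset ℕ) (σ : ℕ → Fin 2) : ℕ → Fin 2 :=
  fun j => if j ∈ I then σ j else 0

open Classical in
/-- The adapted family `Ada(Σ)` of a finite set `Σ` of zero-nonzero conditions on `I`
(encoded as maps `ℕ → Fin 2` vanishing outside `I`), defined by recursion on `card I`: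
if `I = ∅` then `Ada(∅) = ∅` and `Ada({σ_∅}) = {∅}`; otherwise, with `i = max I`,
`I' = I \ {i}`, `Ξ` the set of restrictions of elements of `Σ` to `I'`, and `Ξ'` the set
of elements of `Ξ` having two different extensions in `Σ`,
`Ada(Σ) = Ada(Ξ) ∪ {J ∪ {i} : J ∈ Ada(Ξ')}`. -/
noncomputable def Ada (I : Finset ℕ) (S : Finset (ℕ → Fin 2)) : Finset (Finset ℕ) :=
  if hI : I.Nonempty then
    let i := I.max' hI
    let I' := I.erase i
    let Xi : Finset (ℕ → Fin 2) := S.image (zres I')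
    let Xi' : Finset (ℕ → Fin 2) :=
      Xi.filter (fun ξ => 1 < (S.filter (fun σ => zres I' σ = ξ)).card)
    Ada I' Xi ∪ (Ada I' Xi').image (insert i)
  else if S = ∅ then ∅ else {∅}
termination_by I.card
decreasing_by
  all_goals exact Finset.card_erase_lt_of_mem (I.max'_mem hI)

/-!
Each condition in `Ξ'` has at least two extensions in `Σ`, and extensions of different conditions
are different, so `2 * card Ξ' ≤ card Σ`, while clearly `card Ξ ≤ card Σ`. Thus the recursion never
increases the number of conditions, and at least halves it whenever it puts an index into `J`; it
ends with at least one condition, because `Ada(∅) = ∅`.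
-/

theorem mul_card_le_card_of_le_card_fiber {α β : Type*} [DecidableEq β] {f : α → β}
    {s : Finset α} {t : Finset β} {n : ℕ} (hn : ∀ b ∈ t, n ≤ (s.filter fun a => f a = b).card) :
    n * t.card ≤ s.card :=
  calc
    n * t.card = ∑ _b ∈ t, n := by rw [Finset.sum_const, smul_eq_mul, mul_comm]
    _ ≤ ∑ b ∈ t, (s.filter fun a => f a = b).card := Finset.sum_le_sum hn
    _ = (s.filter fun a => f a ∈ t).card := Finset.sum_card_fiberwise_eq_card_filter s t f
    _ ≤ s.card := Finset.card_filter_le _ _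

open Classical in
/-- The set `Ξ'` of the recursion for `Ada`, with `I` in the role of `I'`: the restrictions to `I`
of elements of `S` that have at least two extensions in `S`. -/
noncomputable def twiceExtended (I : Finset ℕ) (S : Finset (ℕ → Fin 2)) : Finset (ℕ → Fin 2) :=
  (S.image (zres I)).filter fun ξ => 1 < (S.filter fun σ => zres I σ = ξ).card

theorem two_mul_card_twiceExtended_le (I : Finset ℕ) (S : Finset (ℕ → Fin 2)) :
    2 * (twiceExtended I S).card ≤ S.card := by
  classical
  exact mul_card_le_card_of_le_card_fiber fun ξ hξ => Nat.succ_le_of_lt (Finset.mem_filter.mp hξ).2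

theorem mem_Ada_empty {S : Finset (ℕ → Fin 2)} {J : Finset ℕ} :
    J ∈ Ada ∅ S ↔ S.Nonempty ∧ J = ∅ := by
  rw [Ada, dif_neg Finset.not_nonempty_empty]
  split_ifs with hS <;> simp [hS, Finset.nonempty_iff_ne_empty]

open Classical in
theorem Ada_insert_of_lt {a : ℕ} {I : Finset ℕ} (ha : ∀ x ∈ I, x < a)
    (S : Finset (ℕ → Fin 2)) :
    Ada (insert a I) S =
      Ada I (S.image (zres I)) ∪ (Ada I (twiceExtended I S)).image (insert a) := by
  have hne : (insert a I).Nonempty := Finset.insert_nonempty a I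
  have max_eq : (insert a I).max' hne = a :=
    (Finset.max'_eq_iff _ hne a).mpr
      ⟨Finset.mem_insert_self a I,
        (Finset.forall_mem_insert _ _ _).mpr ⟨le_rfl, fun x hx => (ha x hx).le⟩⟩
  have erase_eq : (insert a I).erase a = I :=
    Finset.erase_insert fun haI => (ha a haI).false
  rw [Ada, dif_pos hne]
  simp only [max_eq, erase_eq]
  rfl

theorem two_pow_card_le_of_mem_Ada {I : Finset ℕ} {S : Finset (ℕ → Fin 2)} {J : Finset ℕ}
    (hJ : J ∈ Ada I S) : 2 ^ J.card ≤ S.card := by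
  classical
  induction I using Finset.induction_on_max generalizing S J with
  | empty =>
    obtain ⟨hS, rfl⟩ := mem_Ada_empty.mp hJ
    rw [Finset.card_empty, pow_zero]
    exact Finset.one_le_card.mpr hS
  | insert a I ha ih =>
    rw [Ada_insert_of_lt ha, Finset.mem_union, Finset.mem_image] at hJ
    obtain hJ | ⟨K, hK, rfl⟩ := hJ
    · exact (ih hJ).trans Finset.card_image_le
    · calc
        2 ^ (insert a K).card ≤ 2 ^ (K.card + 1) :=
          Nat.pow_le_pow_right two_pos (Finset.card_insert_le a K)
        _ = 2 * 2 ^ K.card := pow_succ' 2 K.card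
        _ ≤ 2 * (twiceExtended I S).card := Nat.mul_le_mul_left 2 (ih hK)
        _ ≤ S.card := two_mul_card_twiceExtended_le I S

/-- Let `I ⊆ {1,…,s}` and `Σ` a finite set of zero-nonzero conditions
on `I`. For every `J ∈ Ada(Σ)` one has `card J < bit(card Σ)` (where `bit n` is the
number of binary digits of `n`, i.e. `Nat.size n`); equivalently `2 ^ card J ≤ card Σ`. -/
theorem card_lt_bit_of_mem_Ada (s : ℕ) (I : Finset ℕ) (hI : I ⊆ Finset.Icc 1 s)
    (S : Finset (ℕ → Fin 2)) (hsupp : ∀ σ ∈ S, ∀ j ∉ I, σ j = 0)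
    (J : Finset ℕ) (hJ : J ∈ Ada I S) :
    J.card < Nat.size S.card ∧ 2 ^ J.card ≤ S.card := by
  have two_pow_le : 2 ^ J.card ≤ S.card := two_pow_card_le_of_mem_Ada hJ
  exact ⟨Nat.lt_size.mpr two_pow_le, two_pow_le⟩
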